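/- arXiv:1404.2144 — 2 statements merged into one kernel-verified Lean document; each statement's English description precedes it below -/
import Mathlib

section
/- Let p be a prime, R a commutative ring of characteristic p, φ a Frobenius splitting of R, Φ the standard splitting of R[X,Y] associated to φ, and M = (a_{ij}) an invertible 2×2 matrix over R. Then σ_M ∘ Φ = Φ ∘ σ_M (equivalently, the Frobenius splittings of R[X,Y] defined by the standard formula with respect to the basis X, Y and with respect to the basis σ_M(X), σ_M(Y) coincide) if and only if φ(c · a₁₁^s · a₂₁^{p−s}) = 0 and φ(c · a₁₂^s · a₂₂^{p−s}) = 0 for all c ∈ R and all integers 1 ≤ s ≤ p−1. -/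
open MvPolynomial

/-- A Frobenius splitting of a commutative ring `R` of characteristic `p`:
an additive map `φ : R → R` with `φ 1 = 1` and `φ (a ^ p * b) = a * φ b`. -/
def IsFrobeniusSplitting (p : ℕ) {R : Type*} [CommRing R] (φ : R →+ R) : Prop :=
  φ 1 = 1 ∧ ∀ a b : R, φ (a ^ p * b) = a * φ b

open scoped Classical in
/-- `Φ` is the standard splitting of `R[X₁,…,X_r]` associated to `φ`:
on a monomial `c · X^I` it gives `φ c · X^(I/p)` if all components of `I`
are divisible by `p`, and `0` otherwise. -/
def IsStdSplitting (p : ℕ) {R : Type*} [CommRing R] {r : ℕ} (φ : R →+ R)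
    (Φ : MvPolynomial (Fin r) R →+ MvPolynomial (Fin r) R) : Prop :=
  ∀ (c : R) (I : Fin r →₀ ℕ),
    Φ (monomial I c) =
      if ∀ k, p ∣ I k then
        monomial (I.mapRange (· / p) (Nat.zero_div p)) (φ c)
      else 0


/-- The `R`-algebra endomorphism `σ_M` of `R[X,Y]` attached to a `2×2` matrix
`M = (a i j)`, sending `X ↦ a₁₁X + a₁₂Y` and `Y ↦ a₂₁X + a₂₂Y`. -/
noncomputable def sigmaM {R : Type*} [CommRing R] (a : Matrix (Fin 2) (Fin 2) R) :
    MvPolynomial (Fin 2) R →ₐ[R] MvPolynomial (Fin 2) R :=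
  aeval ![C (a 0 0) * X 0 + C (a 0 1) * X 1, C (a 1 0) * X 0 + C (a 1 1) * X 1]

/-!
A `p⁻¹`-linear `φ` makes its standard splitting `Φ` `p⁻¹`-linear as well, so commutation of `Φ` with
an algebra map need only be tested on the monomials `c · X^J` with `J ≠ 0` and all exponents below
`p`, which `Φ` kills. In two variables such a monomial has degree `0 < d < 2p`, and a linear
substitution keeps it homogeneous of degree `d`. Since `Φ` reads only exponents in `p ℕ^r`, it sees
nothing unless `d = p`, and then only the coefficients of the pure powers `X_k ^ p`, which are
the values of `c · X^J` at the columns of the matrix.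
-/

/-- An additive map `φ` is `p⁻¹`-linear (Cartier linear) if `φ (a ^ p * b) = a * φ b`; a Frobenius
splitting is such a map normalized by `φ 1 = 1`. -/
def IsCartierLinear (p : ℕ) {R : Type*} [CommRing R] (φ : R →+ R) : Prop :=
  ∀ a b : R, φ (a ^ p * b) = a * φ b

section PurePowers

variable {R : Type*} [CommSemiring R]

lemma coeff_single_of_isHomogeneous {σ : Type*} [DecidableEq σ] {f : MvPolynomial σ R} {d : ℕ}
    (hf : f.IsHomogeneous d) (k : σ) :
    coeff (Finsupp.single k d) f = eval (Pi.single k 1) f := by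
  rw [eval_eq, Finset.sum_eq_single (Finsupp.single k d)]
  · rw [Finset.prod_eq_one, mul_one]
    intro i hi
    obtain rfl : i = k := by simpa using Finsupp.support_single_subset hi
    simp
  · intro e he hne
    have hdeg : e.degree = d := by
      by_contra h
      exact mem_support_iff.mp he (hf.coeff_eq_zero h)
    obtain ⟨i, hi, hik⟩ : ∃ i ∈ e.support, i ≠ k := by
      by_contra! h
      have hsingle : e = Finsupp.single k (e k) :=
        Finsupp.support_subset_singleton.mp fun i hi ↦ Finset.mem_singleton.mpr (h i hi)
      rw [hsingle, Finsupp.degree_single] at hdeg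
      exact hne (hdeg ▸ hsingle)
    have hfactor : (Pi.single k 1 : σ → R) i ^ e i = 0 := by
      rw [Pi.single_eq_of_ne hik, zero_pow (Finsupp.mem_support_iff.mp hi)]
    rw [Finset.prod_eq_zero hi hfactor, mul_zero]
  · intro h
    rw [notMem_support_iff.mp h, zero_mul]

variable {m n : Type*} [Fintype n] (M : Matrix m n R) {f : MvPolynomial m R} {d : ℕ}

lemma isHomogeneous_aeval_toMvPolynomial (hf : f.IsHomogeneous d) :
    (aeval M.toMvPolynomial f).IsHomogeneous d := by
  simpa only [one_mul] using hf.aeval _ M.toMvPolynomial_isHomogeneous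

lemma coeff_single_aeval_toMvPolynomial (hf : f.IsHomogeneous d) (k : n) :
    coeff (Finsupp.single k d) (aeval M.toMvPolynomial f) = eval (M.col k) f := by
  classical
  have hcol : (fun i ↦ eval (Pi.single k 1) (M.toMvPolynomial i)) = M.col k := by
    ext i
    rw [M.toMvPolynomial_eval_eq_apply, Matrix.mulVec_single_one]
  rw [coeff_single_of_isHomogeneous (isHomogeneous_aeval_toMvPolynomial M hf), ← hcol]
  exact eval₂Hom_bind₁ _ _ _ _

end PurePowers

namespace IsStdSplitting

variable {p : ℕ} {R : Type*} [CommRing R] {r : ℕ} {φ : R →+ R}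
  {Φ : MvPolynomial (Fin r) R →+ MvPolynomial (Fin r) R}

lemma map_C (hΦ : IsStdSplitting p φ Φ) (c : R) : Φ (C c) = C (φ c) := by
  simpa using hΦ c 0

lemma map_monomial_of_lt (hΦ : IsStdSplitting p φ Φ) {J : Fin r →₀ ℕ} (hJ : J ≠ 0)
    (hlt : ∀ k, J k < p) (c : R) : Φ (monomial J c) = 0 := by
  rw [hΦ, if_neg]
  exact fun hdvd ↦ hJ (Finsupp.ext fun k ↦ Nat.eq_zero_of_dvd_of_lt (hdvd k) (hlt k))

lemma coeff_apply (hΦ : IsStdSplitting p φ Φ) (hp : 0 < p) (n : Fin r →₀ ℕ)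
    (f : MvPolynomial (Fin r) R) : coeff n (Φ f) = φ (coeff (p • n) f) := by
  classical
  induction f using MvPolynomial.induction_on' with
  | add f g hf hg => rw [map_add, coeff_add, coeff_add, map_add, hf, hg]
  | monomial I c =>
    rw [hΦ, coeff_monomial]
    by_cases hdvd : ∀ k, p ∣ I k
    · have hdiv : I.mapRange (· / p) (Nat.zero_div p) = n ↔ I = p • n := by
        simp only [Finsupp.ext_iff, Finsupp.mapRange_apply, Finsupp.smul_apply, smul_eq_mul]
        exact forall_congr' fun k ↦ Nat.div_eq_iff_eq_mul_right hp (hdvd k)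
      rw [if_pos hdvd, coeff_monomial, apply_ite φ, map_zero, if_congr hdiv rfl rfl]
    · have hne : I ≠ p • n := by
        rintro rfl
        exact hdvd fun k ↦ dvd_mul_right p (n k)
      rw [if_neg hdvd, if_neg hne, coeff_zero, map_zero]

theorem isCartierLinear [CharP R p] (hΦ : IsStdSplitting p φ Φ) (hp : p.Prime)
    (hφ : IsCartierLinear p φ) : IsCartierLinear p Φ := by
  classical
  have : Fact p.Prime := ⟨hp⟩
  intro f g
  induction f using MvPolynomial.induction_on' with
  | add f₁ f₂ h₁ h₂ => rw [add_pow_char, add_mul, map_add, h₁, h₂, add_mul]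
  | monomial I c =>
    ext n
    have hle : p • I ≤ p • n ↔ I ≤ n := by
      simp only [Finsupp.le_def, Finsupp.smul_apply, smul_eq_mul, Nat.mul_le_mul_left_iff hp.pos]
    have hsub : p • n - p • I = p • (n - I) := by
      ext k
      simp [Nat.mul_sub]
    rw [hΦ.coeff_apply hp.pos, monomial_pow, coeff_monomial_mul', coeff_monomial_mul',
      hΦ.coeff_apply hp.pos, apply_ite φ, hφ, map_zero, hsub, if_congr hle rfl rfl]

theorem algHom_commute_iff [CharP R p] {s : ℕ}
    {Ψ : MvPolynomial (Fin s) R →+ MvPolynomial (Fin s) R} (hΦ : IsStdSplitting p φ Φ)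
    (hΨ : IsStdSplitting p φ Ψ) (hp : p.Prime) (hφ : IsCartierLinear p φ)
    (σ : MvPolynomial (Fin r) R →ₐ[R] MvPolynomial (Fin s) R) :
    (∀ f, σ (Φ f) = Ψ (σ f)) ↔
      ∀ J : Fin r →₀ ℕ, J ≠ 0 → (∀ k, J k < p) → ∀ c, Ψ (σ (monomial J c)) = 0 := by
  refine ⟨fun hcomm J hJ hlt c ↦ ?_, fun hzero f ↦ ?_⟩
  · rw [← hcomm, hΦ.map_monomial_of_lt hJ hlt, map_zero]
  induction f using MvPolynomial.induction_on' with
  | add f g hf hg => simp only [map_add, hf, hg]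
  | monomial I c =>
    set Q : Fin r →₀ ℕ := I.mapRange (· / p) (Nat.zero_div p)
    set J : Fin r →₀ ℕ := I.mapRange (· % p) (Nat.zero_mod p)
    have hdivmod : monomial I c = monomial Q (1 : R) ^ p * monomial J c := by
      have hI : I = p • Q + J := by
        ext k
        simp [Q, J, Nat.div_add_mod]
      rw [monomial_pow, monomial_mul, one_pow, one_mul, ← hI]
    have hreduced : σ (Φ (monomial J c)) = Ψ (σ (monomial J c)) := by
      by_cases hJ : J = 0
      · rw [hJ, ← C_apply, hΦ.map_C, algHom_C, algHom_C, algebraMap_eq, hΨ.map_C]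
      · have hlt : ∀ k, J k < p := fun k ↦ Nat.mod_lt _ hp.pos
        rw [hΦ.map_monomial_of_lt hJ hlt, hzero J hJ hlt, map_zero]
    rw [hdivmod, hΦ.isCartierLinear hp hφ, map_mul, map_mul, map_pow,
      hΨ.isCartierLinear hp hφ, hreduced]

lemma map_eq_zero_iff_of_isHomogeneous (hΦ : IsStdSplitting p φ Φ) {d : ℕ} (hd₀ : 0 < d)
    (hd : d < 2 * p) {f : MvPolynomial (Fin r) R} (hf : f.IsHomogeneous d) :
    Φ f = 0 ↔ ∀ k, φ (coeff (Finsupp.single k p) f) = 0 := by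
  have hp : 0 < p := by lia
  have hcoeff (k : Fin r) :
      coeff (Finsupp.single k 1) (Φ f) = φ (coeff (Finsupp.single k p) f) := by
    rw [hΦ.coeff_apply hp, Finsupp.smul_single, smul_eq_mul, mul_one]
  refine ⟨fun hzero k ↦ by rw [← hcoeff, hzero, coeff_zero], fun hpure ↦ ?_⟩
  ext n
  rw [coeff_zero]
  by_cases hdeg : p * n.degree = d
  · have hn : n.degree = 1 := by
      have : 0 < n.degree := Nat.pos_of_mul_pos_left (hdeg ▸ hd₀)
      have : n.degree < 2 := by
        rw [← hdeg, mul_comm] at hd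
        exact Nat.lt_of_mul_lt_mul_right hd
      lia
    obtain ⟨k, rfl⟩ := (Finsupp.sum_eq_one_iff n).mp hn
    rw [hcoeff, hpure]
  · rw [hΦ.coeff_apply hp, hf.coeff_eq_zero, map_zero]
    rwa [map_nsmul, smul_eq_mul]

lemma map_aeval_toMvPolynomial_monomial_eq_zero_iff (hΦ : IsStdSplitting p φ Φ)
    {m : Type*} [Fintype m] (M : Matrix m (Fin r) R) {J : m →₀ ℕ} (hJ : J ≠ 0)
    (hdeg : J.degree < 2 * p) (c : R) :
    Φ (aeval M.toMvPolynomial (monomial J c)) = 0 ↔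
      (J.degree = p → ∀ k, φ (c * ∏ i, M i k ^ J i) = 0) := by
  have hmon : (monomial J c).IsHomogeneous J.degree := isHomogeneous_monomial c rfl
  have hhom := isHomogeneous_aeval_toMvPolynomial M hmon
  have hpos : 0 < J.degree := Nat.pos_of_ne_zero fun h ↦ hJ ((Finsupp.degree_eq_zero_iff J).mp h)
  rw [hΦ.map_eq_zero_iff_of_isHomogeneous hpos hdeg hhom]
  by_cases hJp : J.degree = p
  · have hcoeff (k : Fin r) : coeff (Finsupp.single k p) (aeval M.toMvPolynomial (monomial J c)) =
        c * ∏ i, M i k ^ J i := by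
      rw [← hJp, coeff_single_aeval_toMvPolynomial M hmon, eval_monomial,
        Finsupp.prod_fintype _ _ fun _ ↦ pow_zero _]
      rfl
    simp only [hcoeff, hJp, true_imp_iff]
  · refine iff_of_true (fun k ↦ ?_) fun h ↦ absurd h hJp
    rw [hhom.coeff_eq_zero, map_zero]
    rw [Finsupp.degree_single]
    exact Ne.symm hJp

end IsStdSplitting

lemma sigmaM_eq_aeval_toMvPolynomial {R : Type*} [CommRing R] (a : Matrix (Fin 2) (Fin 2) R) :
    sigmaM a = aeval a.toMvPolynomial := by
  ext1 i
  fin_cases i <;> simp [sigmaM, Matrix.toMvPolynomial, Fin.sum_univ_two, C_mul_X_eq_monomial]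

theorem stmt4_general {p : ℕ} (hp : p.Prime) {R : Type*} [CommRing R] [CharP R p] {φ : R →+ R}
    (hφ : IsCartierLinear p φ) {r : ℕ} {Φ : MvPolynomial (Fin 2) R →+ MvPolynomial (Fin 2) R}
    {Ψ : MvPolynomial (Fin r) R →+ MvPolynomial (Fin r) R} (hΦ : IsStdSplitting p φ Φ)
    (hΨ : IsStdSplitting p φ Ψ) (M : Matrix (Fin 2) (Fin r) R) :
    (∀ f, aeval M.toMvPolynomial (Φ f) = Ψ (aeval M.toMvPolynomial f)) ↔
      ∀ (c : R) (s : ℕ), 1 ≤ s → s ≤ p - 1 → ∀ k, φ (c * (M 0 k ^ s * M 1 k ^ (p - s))) = 0 := by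
  have hp₀ := hp.pos
  rw [hΦ.algHom_commute_iff hΨ hp hφ]
  constructor
  · intro hzero c s hs₁ hs k
    let J : Fin 2 →₀ ℕ := Finsupp.equivFunOnFinite.symm ![s, p - s]
    have hJ₀ : J 0 = s := rfl
    have hJ₁ : J 1 = p - s := rfl
    have hJ : J ≠ 0 := fun h ↦ by
      rw [h, Finsupp.zero_apply] at hJ₀
      lia
    have hlt : ∀ i, J i < p := Fin.forall_fin_two.mpr ⟨by lia, by lia⟩
    have hdeg : J.degree = p := by
      rw [Finsupp.degree_eq_sum, Fin.sum_univ_two]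
      lia
    have hpure := (hΨ.map_aeval_toMvPolynomial_monomial_eq_zero_iff M hJ (by lia) c).mp
      (hzero J hJ hlt c) hdeg k
    rwa [Fin.prod_univ_two, hJ₀, hJ₁] at hpure
  · intro hpure J hJ hlt c
    have hsum : J.degree = J 0 + J 1 := by rw [Finsupp.degree_eq_sum, Fin.sum_univ_two]
    have h₀ := hlt 0
    have h₁ := hlt 1
    refine (hΨ.map_aeval_toMvPolynomial_monomial_eq_zero_iff M hJ (by lia) c).mpr fun hdeg k ↦ ?_
    rw [Fin.prod_univ_two, show J 1 = p - J 0 by lia]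
    exact hpure c (J 0) (by lia) (by lia) k

/-- Lemma 2.2 of the paper: for an invertible matrix `M`, the standard splitting
commutes with `σ_M` (equivalently, the splittings attached to the bases `X, Y` and
`σ_M X, σ_M Y` coincide) iff `φ(c a₁₁^s a₂₁^{p-s}) = φ(c a₁₂^s a₂₂^{p-s}) = 0`
for all `c ∈ R` and `1 ≤ s ≤ p - 1`. -/
theorem stmt4 (p : ℕ) (hp : p.Prime) (R : Type*) [CommRing R] [CharP R p]
    (φ : R →+ R) (hφ : IsFrobeniusSplitting p φ)
    (Φ : MvPolynomial (Fin 2) R →+ MvPolynomial (Fin 2) R)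
    (hΦ : IsStdSplitting p φ Φ)
    (a : Matrix (Fin 2) (Fin 2) R) (ha : IsUnit a) :
    (∀ f : MvPolynomial (Fin 2) R, sigmaM a (Φ f) = Φ (sigmaM a f)) ↔
      (∀ (c : R) (s : ℕ), 1 ≤ s → s ≤ p - 1 →
        φ (c * (a 0 0 ^ s * a 1 0 ^ (p - s))) = 0 ∧
        φ (c * (a 0 1 ^ s * a 1 1 ^ (p - s))) = 0) := by
  simpa only [sigmaM_eq_aeval_toMvPolynomial, Fin.forall_fin_two] using
    stmt4_general hp hφ.2 hΦ hΦ a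
end

section
/- Let p be a prime, R a commutative ring of characteristic p, φ a Frobenius splitting of R, Φ the standard splitting of R[X,Y] associated to φ, and M = (a_{ij}) a 2×2 matrix over R. If σ_M ∘ Φ = Φ ∘ σ_M, then φ(a₁₁^s · a₂₁^{p−s}) = 0 and φ(a₁₂^s · a₂₂^{p−s}) = 0 for all integers 1 ≤ s ≤ p−1. -/
open MvPolynomial

/-!
The coefficient of `X_j ^ p` in a form of degree `p` is its value at the `j`-th unit vector, and
`σ_M` carries evaluation at that vector to evaluation at the `j`-th column of `M`. Hence for a form
`f` of degree `p` the coefficient of `X_j` in `Φ (σ_M f)` is `φ` of the value of `f` at the `j`-th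
column. Since `Φ` kills `X ^ s * Y ^ (p - s)` for `0 < s < p`, commutation forces this coefficient
to vanish for that form.
-/

section UnitVector

variable {σ R : Type*} [DecidableEq σ] [CommSemiring R]

theorem finsuppProd_piSingle_one_pow (i : σ) (d : σ →₀ ℕ) :
    (d.prod fun k e => (Pi.single i 1 : σ → R) k ^ e) =
      if d = Finsupp.single i d.degree then 1 else 0 := by
  split_ifs with hd
  · rw [hd, Finsupp.prod_single_index] <;> simp
  · obtain ⟨k, hk, hki⟩ : ∃ k ∈ d.support, k ≠ i := by
      by_contra! h
      have hd' : d = Finsupp.single i (d i) :=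
        Finsupp.support_subset_singleton.mp fun k hk => Finset.mem_singleton.mpr (h k hk)
      have hdeg : d.degree = d i := by
        rw [hd', Finsupp.degree_single, Finsupp.single_eq_same]
      exact hd (hdeg ▸ hd')
    have hfactor : (Pi.single i 1 : σ → R) k ^ d k = 0 := by
      rw [Pi.single_eq_of_ne hki, zero_pow (Finsupp.mem_support_iff.mp hk)]
    exact Finset.prod_eq_zero hk hfactor

theorem coeff_single_eq_eval_piSingle {f : MvPolynomial σ R} {n : ℕ} (hf : f.IsHomogeneous n)
    (i : σ) : coeff (Finsupp.single i n) f = eval (Pi.single i 1) f := by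
  have hterm : ∀ d ∈ f.support, coeff d f * (d.prod fun k e => (Pi.single i 1 : σ → R) k ^ e) =
      if d = Finsupp.single i n then coeff d f else 0 := by
    intro d hd
    have hdeg : d.degree = n := by
      by_contra hne
      exact mem_support_iff.mp hd (hf.coeff_eq_zero hne)
    rw [finsuppProd_piSingle_one_pow, hdeg, mul_ite, mul_one, mul_zero]
  calc coeff (Finsupp.single i n) f
      = ∑ d ∈ f.support, if d = Finsupp.single i n then coeff d f else 0 := by
        rw [Finset.sum_ite_eq']
        split_ifs with h
        · rfl
        · exact notMem_support_iff.mp h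
    _ = ∑ d ∈ f.support, coeff d f * (d.prod fun k e => (Pi.single i 1 : σ → R) k ^ e) :=
        (Finset.sum_congr rfl hterm).symm
    _ = eval (Pi.single i 1) f := (eval_eq _ f).symm

end UnitVector

section StandardSplitting

variable {R : Type*} [CommRing R]

section LinearSubstitution

variable (a : Matrix (Fin 2) (Fin 2) R)

theorem sigmaM_X (i : Fin 2) :
    sigmaM a (X i) = C (a i 0) * X 0 + C (a i 1) * X 1 := by
  rw [sigmaM, aeval_X]
  fin_cases i <;> rfl

theorem isHomogeneous_sigmaM {f : MvPolynomial (Fin 2) R} {n : ℕ} (hf : f.IsHomogeneous n) :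
    (sigmaM a f).IsHomogeneous n := by
  have hlin : ∀ i, (sigmaM a (X i)).IsHomogeneous 1 := fun i => by
    rw [sigmaM_X]
    exact (isHomogeneous_C_mul_X _ _).add (isHomogeneous_C_mul_X _ _)
  have hσ : aeval (fun i => sigmaM a (X i)) f = sigmaM a f :=
    (DFunLike.congr_fun (aeval_unique (sigmaM a)) f).symm
  simpa only [hσ, one_mul] using hf.aeval (fun i => sigmaM a (X i)) hlin

theorem eval_piSingle_sigmaM (j : Fin 2) (f : MvPolynomial (Fin 2) R) :
    eval (Pi.single j 1) (sigmaM a f) = eval (a.col j) f := by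
  induction f using MvPolynomial.induction_on with
  | C c => rw [← algebraMap_eq, AlgHom.commutes, algebraMap_eq, eval_C, eval_C]
  | add f g hf hg => rw [map_add, map_add, map_add, hf, hg]
  | mul_X f i hf =>
    have hX : eval (Pi.single j 1) (sigmaM a (X i)) = a i j := by
      rw [sigmaM_X]
      fin_cases j <;> simp
    rw [map_mul, map_mul, map_mul, hf, hX, eval_X, Matrix.col_apply]

theorem coeff_single_sigmaM {f : MvPolynomial (Fin 2) R} {n : ℕ} (hf : f.IsHomogeneous n)
    (j : Fin 2) : coeff (Finsupp.single j n) (sigmaM a f) = eval (a.col j) f := by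
  rw [coeff_single_eq_eval_piSingle (isHomogeneous_sigmaM a hf), eval_piSingle_sigmaM]

end LinearSubstitution

namespace IsStdSplitting

variable {p r : ℕ} {φ : R →+ R} {Φ : MvPolynomial (Fin r) R →+ MvPolynomial (Fin r) R}

theorem map_monomial_of_not_dvd (hΦ : IsStdSplitting p φ Φ) {I : Fin r →₀ ℕ} {k : Fin r}
    (hk : ¬p ∣ I k) (c : R) : Φ (monomial I c) = 0 := by
  rw [hΦ c I, if_neg fun h => hk (h k)]

theorem map_monomial_nsmul (hΦ : IsStdSplitting p φ Φ) (hp : 0 < p) (J : Fin r →₀ ℕ) (c : R) :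
    Φ (monomial (p • J) c) = monomial J (φ c) := by
  have hdiv : (p • J).mapRange (· / p) (Nat.zero_div p) = J := by
    ext k
    exact Nat.mul_div_cancel_left (J k) hp
  have hdvd : ∀ k, p ∣ (p • J) k := fun k => dvd_mul_right p (J k)
  rw [hΦ c (p • J), if_pos hdvd, hdiv]

theorem coeff_map (hΦ : IsStdSplitting p φ Φ) (hp : 0 < p) (J : Fin r →₀ ℕ)
    (f : MvPolynomial (Fin r) R) : coeff J (Φ f) = φ (coeff (p • J) f) := by
  classical
  induction f using MvPolynomial.induction_on' with
  | add f g hf hg => rw [map_add, coeff_add, hf, hg, coeff_add, map_add]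
  | monomial I c =>
    by_cases hI : ∀ k, p ∣ I k
    · choose q hq using hI
      obtain rfl : I = p • Finsupp.equivFunOnFinite.symm q := Finsupp.ext hq
      have hinj : Function.Injective fun K : Fin r →₀ ℕ => p • K :=
        nsmul_right_injective hp.ne'
      rw [hΦ.map_monomial_nsmul hp, coeff_monomial, coeff_monomial]
      simp only [hinj.eq_iff, apply_ite φ, map_zero]
    · obtain ⟨k, hk⟩ := not_forall.mp hI
      have hne : I ≠ p • J := by
        rintro rfl
        exact hk (dvd_mul_right p (J k))
      rw [hΦ.map_monomial_of_not_dvd hk, coeff_zero, coeff_monomial, if_neg hne, map_zero]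

theorem coeff_map_sigmaM {Φ : MvPolynomial (Fin 2) R →+ MvPolynomial (Fin 2) R}
    (hΦ : IsStdSplitting p φ Φ) (hp : 0 < p) (a : Matrix (Fin 2) (Fin 2) R)
    {f : MvPolynomial (Fin 2) R} (hf : f.IsHomogeneous p) (j : Fin 2) :
    coeff (Finsupp.single j 1) (Φ (sigmaM a f)) = φ (eval (a.col j) f) := by
  rw [hΦ.coeff_map hp, Finsupp.smul_single, smul_eq_mul, mul_one, coeff_single_sigmaM a hf]

theorem map_X_pow_mul_X_pow_of_not_dvd {Φ : MvPolynomial (Fin 2) R →+ MvPolynomial (Fin 2) R}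
    (hΦ : IsStdSplitting p φ Φ) {s : ℕ} (hs : ¬p ∣ s) (t : ℕ) :
    Φ (X 0 ^ s * X 1 ^ t) = 0 := by
  have hexp : (Finsupp.single 0 s + Finsupp.single 1 t : Fin 2 →₀ ℕ) 0 = s := by
    simp
  rw [X_pow_eq_monomial, X_pow_eq_monomial, monomial_mul]
  exact hΦ.map_monomial_of_not_dvd (k := 0) (by rwa [hexp]) _

end IsStdSplitting

theorem stmt5_general {p : ℕ} {φ : R →+ R}
    {Φ : MvPolynomial (Fin 2) R →+ MvPolynomial (Fin 2) R} (hΦ : IsStdSplitting p φ Φ)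
    {a : Matrix (Fin 2) (Fin 2) R}
    (hcomm : ∀ f : MvPolynomial (Fin 2) R, sigmaM a (Φ f) = Φ (sigmaM a f))
    {s : ℕ} (hs : 0 < s) (hsp : s < p) (j : Fin 2) :
    φ (a 0 j ^ s * a 1 j ^ (p - s)) = 0 := by
  let f : MvPolynomial (Fin 2) R := X 0 ^ s * X 1 ^ (p - s)
  have hf : f.IsHomogeneous p := by
    simpa only [Nat.add_sub_cancel' hsp.le] using
      (isHomogeneous_X_pow 0 s).mul (isHomogeneous_X_pow (R := R) (1 : Fin 2) (p - s))
  have hΦf : Φ f = 0 := hΦ.map_X_pow_mul_X_pow_of_not_dvd (Nat.not_dvd_of_pos_of_lt hs hsp) (p - s)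
  calc φ (a 0 j ^ s * a 1 j ^ (p - s))
      = φ (eval (a.col j) f) := by simp [f]
    _ = coeff (Finsupp.single j 1) (Φ (sigmaM a f)) :=
        (hΦ.coeff_map_sigmaM (hs.trans hsp) a hf j).symm
    _ = 0 := by rw [← hcomm, hΦf, map_zero, coeff_zero]

end StandardSplitting

/-- Necessity direction of Lemma 2.2: if the standard splitting `Φ` commutes with
`σ_M`, then `φ(a₁₁^s a₂₁^{p-s}) = φ(a₁₂^s a₂₂^{p-s}) = 0` for all `1 ≤ s ≤ p - 1`. -/
theorem stmt5 (p : ℕ) (hp : p.Prime) (R : Type*) [CommRing R] [CharP R p]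
    (φ : R →+ R) (hφ : IsFrobeniusSplitting p φ)
    (Φ : MvPolynomial (Fin 2) R →+ MvPolynomial (Fin 2) R)
    (hΦ : IsStdSplitting p φ Φ)
    (a : Matrix (Fin 2) (Fin 2) R)
    (hcomm : ∀ f : MvPolynomial (Fin 2) R, sigmaM a (Φ f) = Φ (sigmaM a f)) :
    ∀ s : ℕ, 1 ≤ s → s ≤ p - 1 →
      φ (a 0 0 ^ s * a 1 0 ^ (p - s)) = 0 ∧ φ (a 0 1 ^ s * a 1 1 ^ (p - s)) = 0 := by
  intro s hs hsp
  have hlt : s < p := Nat.lt_of_le_pred hp.pos hsp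
  exact ⟨stmt5_general hΦ hcomm hs hlt 0, stmt5_general hΦ hcomm hs hlt 1⟩
end
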